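/- arXiv:2405.03364 — 2 statements merged into one kernel-verified Lean document; each statement's English description precedes it below -/
import Mathlib

section
/- Let (M, δ) be a matrix algebra with delta-form, H a Hilbert-M-bimodule, and φ_R: H ⊗ L²(M) → H the bounded extension of ξ ⊗ x ↦ ξ·μ^{1/2}(x). Then φ_R ∘ φ_R* = id_H and φ_R* ∘ φ_R equals the orthogonal projection of H ⊗ L²(M) onto the relative tensor product H ⊗_{(M,δ)} L²(M). In particular φ_R restricts to a unitary M-bimodular isomorphism H ⊗_{(M,δ)} L²(M) ≅ H. -/
/-!
With `Eᵢⱼ` the matrix units, the nondegenerate pairing on `H ⊗ L²(M)` reads off the coordinates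
of `φ_R* ξ` and forces
`φ_R* ξ = d⁻¹ ∑ᵢⱼ ξ·(τ⁻¹ Eⱼᵢ τ⁻¹) ⊗ Eᵢⱼ`.
Everything then follows from two facts. The first is `∑ᵢⱼ Eⱼᵢ m Eᵢⱼ = tr(m) 1`, which for
`m = σ⁻¹`, `tr σ⁻¹ = d`, gives `φ_R φ_R* = id`. The second is that `∑ᵢⱼ Eⱼᵢ ⊗ Eᵢⱼ` intertwines
multiplication on opposite sides of its two legs: this places the range of `φ_R*` inside the
relative tensor product, and rewrites `φ_R* φ_R` as `d⁻¹ ∑ᵢⱼ ρ(τ⁻¹ Eⱼᵢ τ⁻¹) ⊗ λ(Eᵢⱼ)`. On a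
vector `u` of the relative tensor product the right action in the latter expression can be traded
for a left action on the second leg, and the first fact again yields `φ_R* φ_R u = u`.
-/

open scoped ComplexOrder TensorProduct

local notation "⟪" x ", " y "⟫" => @inner ℂ _ _ x y

/-- The element `∑ Eⱼᵢ ⊗ Eᵢⱼ` of `M ⊗ M` intertwines right multiplication on the first leg with
left multiplication on the second; the bilinear map `B` stands for an arbitrary linear map out
of `M ⊗ M`. -/
lemma sum_single_mul_right {d : ℕ} {V : Type*} [AddCommGroup V] [Module ℂ V]
    (B : Matrix (Fin d) (Fin d) ℂ →ₗ[ℂ] Matrix (Fin d) (Fin d) ℂ →ₗ[ℂ] V)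
    (m : Matrix (Fin d) (Fin d) ℂ) :
    ∑ i, ∑ j, B (Matrix.single j i 1 * m) (Matrix.single i j 1)
      = ∑ i, ∑ j, B (Matrix.single j i 1) (m * Matrix.single i j 1) := by
  have h1 : ∀ i j : Fin d, Matrix.single j i (1 : ℂ) * m = ∑ k, m i k • Matrix.single j k 1 := by
    intro i j
    ext a b
    simp [Matrix.sum_apply, Matrix.single_apply, Matrix.mul_apply,
      ite_and]
  have h2 : ∀ i j : Fin d, m * Matrix.single i j (1 : ℂ) = ∑ k, m k i • Matrix.single k j 1 := by
    intro i j
    ext a b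
    simp [Matrix.sum_apply, Matrix.single_apply, Matrix.mul_apply, ite_and]
  simp only [h1, h2, map_sum, map_smul, LinearMap.sum_apply, LinearMap.smul_apply]
  calc _ = ∑ j, ∑ i, ∑ k, m i k • B (Matrix.single j k 1) (Matrix.single i j 1) :=
        Finset.sum_comm
    _ = ∑ j, ∑ k, ∑ i, m i k • B (Matrix.single j k 1) (Matrix.single i j 1) :=
        Finset.sum_congr rfl fun _ _ => Finset.sum_comm
    _ = _ := Finset.sum_comm

/-- The element `∑ Eⱼᵢ ⊗ Eᵢⱼ` of `M ⊗ M` intertwines left multiplication on the first leg with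
right multiplication on the second. -/
lemma sum_single_mul_left {d : ℕ} {V : Type*} [AddCommGroup V] [Module ℂ V]
    (B : Matrix (Fin d) (Fin d) ℂ →ₗ[ℂ] Matrix (Fin d) (Fin d) ℂ →ₗ[ℂ] V)
    (m : Matrix (Fin d) (Fin d) ℂ) :
    ∑ i, ∑ j, B (m * Matrix.single j i 1) (Matrix.single i j 1)
      = ∑ i, ∑ j, B (Matrix.single j i 1) (Matrix.single i j 1 * m) := by
  have h := sum_single_mul_right B.flip m
  simp only [LinearMap.flip_apply] at h
  rw [Finset.sum_comm, ← h, Finset.sum_comm]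

lemma sum_single_mul_single {d : ℕ} (m : Matrix (Fin d) (Fin d) ℂ) :
    ∑ i, ∑ j, Matrix.single j i (1 : ℂ) * m * Matrix.single i j 1 = m.trace • 1 := by
  ext a b
  simp [Matrix.sum_apply, Matrix.single_mul_mul_single, Matrix.single_apply, Matrix.trace,
    Matrix.one_apply, ite_and]

/-- The slice map `id ⊗ (x ↦ xᵢⱼ) : H ⊗ M → H`, giving the coordinates of a tensor along the
matrix units of the second leg. -/
noncomputable def slice {d : ℕ} (H : Type*) [AddCommGroup H] [Module ℂ H] (i j : Fin d) :
    H ⊗[ℂ] Matrix (Fin d) (Fin d) ℂ →ₗ[ℂ] H :=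
  (TensorProduct.rid ℂ H).toLinearMap ∘ₗ
    TensorProduct.map LinearMap.id (Matrix.entryLinearMap ℂ ℂ i j)

@[simp] lemma slice_tmul {d : ℕ} {H : Type*} [AddCommGroup H] [Module ℂ H] (i j : Fin d)
    (ξ : H) (x : Matrix (Fin d) (Fin d) ℂ) : slice H i j (ξ ⊗ₜ[ℂ] x) = x i j • ξ := by
  simp [slice]

lemma sum_slice_tmul {d : ℕ} {H : Type*} [AddCommGroup H] [Module ℂ H]
    (w : H ⊗[ℂ] Matrix (Fin d) (Fin d) ℂ) :
    ∑ i, ∑ j, slice H i j w ⊗ₜ[ℂ] Matrix.single i j (1 : ℂ) = w := by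
  induction w with
  | zero => simp
  | add u v hu hv =>
    conv_rhs => rw [← hu, ← hv]
    simp [TensorProduct.add_tmul, Finset.sum_add_distrib]
  | tmul ξ x =>
    conv_rhs => rw [Matrix.matrix_eq_sum_single x]
    simp [TensorProduct.tmul_sum, TensorProduct.smul_tmul]

/-- For a Hilbert-`M`-bimodule `H` over the matrix algebra `M = ℂ^{d×d}` with
delta-form `δ(x) = d·tr(xσ)` (and `τ = σ^{1/2}`, `μ^{±1/2}(x) = τ^{∓1} x τ^{±1}`), the map
`φ_R : H ⊗ L²(M) → H`, `ξ ⊗ x ↦ ξ·μ^{1/2}(x)`, satisfies `φ_R ∘ φ_R* = id_H` and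
`φ_R* ∘ φ_R` is the orthogonal projection onto the relative tensor product
`H ⊗_{(M,δ)} L²(M)`; in particular `φ_R` restricts to a unitary `M`-bimodular
isomorphism `H ⊗_{(M,δ)} L²(M) ≅ H`. -/
theorem stmt6 (d : ℕ) (hd : 0 < d)
    (σ τ : Matrix (Fin d) (Fin d) ℂ) (hσ : σ.PosDef)
    (htr : (σ⁻¹).trace = (d : ℂ))
    (hτ : τ.PosDef) (hττ : τ * τ = σ)
    {H : Type*} [NormedAddCommGroup H] [InnerProductSpace ℂ H]
    (lH : Matrix (Fin d) (Fin d) ℂ →ₐ[ℂ] Module.End ℂ H)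
    (rH : (Matrix (Fin d) (Fin d) ℂ)ᵐᵒᵖ →ₐ[ℂ] Module.End ℂ H)
    (hcomm : ∀ x y, lH x * rH (MulOpposite.op y) = rH (MulOpposite.op y) * lH x)
    (hlstar : ∀ x (ξ η : H), ⟪lH x ξ, η⟫ = ⟪ξ, lH (star x) η⟫)
    (hrstar : ∀ y (ξ η : H), ⟪rH (MulOpposite.op y) ξ, η⟫ =
      ⟪ξ, rH (MulOpposite.op (star y)) η⟫)
    -- the tensor product inner product on H ⊗ L²(M), linear in the first variable
    (ipT : (H ⊗[ℂ] Matrix (Fin d) (Fin d) ℂ) →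
      (H ⊗[ℂ] Matrix (Fin d) (Fin d) ℂ) → ℂ)
    (hipT₁ : ∀ u v w, ipT (u + v) w = ipT u w + ipT v w)
    (hipT₂ : ∀ u v w, ipT u (v + w) = ipT u v + ipT u w)
    (hipTt : ∀ (ξ η : H) (x y : Matrix (Fin d) (Fin d) ℂ),
      ipT (ξ ⊗ₜ[ℂ] x) (η ⊗ₜ[ℂ] y) = ⟪η, ξ⟫ * ((d : ℂ) * ((star y) * x * σ).trace))
    -- φ_R and its adjoint φ_R*
    (φR : H ⊗[ℂ] Matrix (Fin d) (Fin d) ℂ →ₗ[ℂ] H)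
    (hφR : ∀ (ξ : H) (x : Matrix (Fin d) (Fin d) ℂ),
      φR (ξ ⊗ₜ[ℂ] x) = rH (MulOpposite.op (τ⁻¹ * x * τ)) ξ)
    (φRstar : H →ₗ[ℂ] H ⊗[ℂ] Matrix (Fin d) (Fin d) ℂ)
    (hadj : ∀ ξ u, ipT (φRstar ξ) u = ⟪φR u, ξ⟫) :
    -- φ_R ∘ φ_R* = id_H
    (∀ ξ, φR (φRstar ξ) = ξ) ∧
    -- φ_R* ∘ φ_R is an idempotent, self-adjoint, with range the relative tensor product
    (∀ u, φRstar (φR (φRstar (φR u))) = φRstar (φR u)) ∧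
    (∀ u v, ipT (φRstar (φR u)) v = ipT u (φRstar (φR v))) ∧
    (∀ u, (∃ w, φRstar (φR w) = u) ↔
      ∀ x, TensorProduct.map (rH (MulOpposite.op x)) LinearMap.id u
        = TensorProduct.map LinearMap.id (LinearMap.mulLeft ℂ (τ⁻¹ * x * τ)) u) ∧
    -- φ_R restricted to the relative tensor product is isometric (unitary onto H)
    (∀ u, (∀ x, TensorProduct.map (rH (MulOpposite.op x)) LinearMap.id u
        = TensorProduct.map LinearMap.id (LinearMap.mulLeft ℂ (τ⁻¹ * x * τ)) u)
      → φRstar (φR u) = u) ∧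
    -- φ_R is M-bimodular
    (∀ (a : Matrix (Fin d) (Fin d) ℂ) u,
      φR (TensorProduct.map (lH a) LinearMap.id u) = lH a (φR u)) ∧
    (∀ (c : Matrix (Fin d) (Fin d) ℂ) u,
      φR (TensorProduct.map LinearMap.id (LinearMap.mulRight ℂ (τ * c * τ⁻¹)) u)
        = rH (MulOpposite.op c) (φR u)) := by
  have hdC : (d : ℂ) ≠ 0 := by exact_mod_cast hd.ne'
  have hσu : IsUnit σ.det := (Matrix.isUnit_iff_isUnit_det _).1 hσ.isUnit
  have hτu : IsUnit τ.det := (Matrix.isUnit_iff_isUnit_det _).1 hτ.isUnit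
  have t1 : τ * τ⁻¹ = 1 := Matrix.mul_nonsing_inv _ hτu
  have t2 : τ⁻¹ * τ = 1 := Matrix.nonsing_inv_mul _ hτu
  have t1' : ∀ z, τ * (τ⁻¹ * z) = z := fun z => by rw [← mul_assoc, t1, one_mul]
  have hσinv : τ⁻¹ * τ⁻¹ = σ⁻¹ := by rw [← hττ, Matrix.mul_inv_rev]
  have hσstar : star σ = σ := hσ.isHermitian
  have hσistar : star σ⁻¹ = σ⁻¹ := hσ.isHermitian.inv
  have hτstar : star τ⁻¹ = τ⁻¹ := hτ.isHermitian.inv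
  have hmul : ∀ x y (ξ : H), rH (MulOpposite.op x) (rH (MulOpposite.op y) ξ)
      = rH (MulOpposite.op (y * x)) ξ := by
    intro x y ξ
    rw [MulOpposite.op_mul, map_mul]; rfl
  -- the map `x ↦ ξ · (τ⁻¹ x τ⁻¹)`
  let L : H → Matrix (Fin d) (Fin d) ℂ →ₗ[ℂ] H := fun ξ =>
    (LinearMap.applyₗ ξ) ∘ₗ rH.toLinearMap ∘ₗ (MulOpposite.opLinearEquiv ℂ).toLinearMap ∘ₗ
      LinearMap.mulLeft ℂ τ⁻¹ ∘ₗ LinearMap.mulRight ℂ τ⁻¹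
  have hL : ∀ ξ x, L ξ x = rH (MulOpposite.op (τ⁻¹ * x * τ⁻¹)) ξ := by
    intro ξ x; simp [L, mul_assoc]
  let B : H → Matrix (Fin d) (Fin d) ℂ →ₗ[ℂ] Matrix (Fin d) (Fin d) ℂ →ₗ[ℂ]
      H ⊗[ℂ] Matrix (Fin d) (Fin d) ℂ := fun ξ => (TensorProduct.mk ℂ H _) ∘ₗ L ξ
  have hB : ∀ ξ x y, B ξ x y = rH (MulOpposite.op (τ⁻¹ * x * τ⁻¹)) ξ ⊗ₜ[ℂ] y := by
    intro ξ x y; simp [B, hL]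
  have ip0l : ∀ w, ipT 0 w = 0 := fun w => by simpa using hipT₁ 0 0 w
  have ip0r : ∀ w, ipT w 0 = 0 := fun w => by simpa using hipT₂ w 0 0
  -- pairing against `η ⊗ Eᵢⱼ σ⁻¹` reads off the `(i, j)` coordinate
  have hcoord : ∀ w (η : H) i j, ipT w (η ⊗ₜ[ℂ] (Matrix.single i j 1 * σ⁻¹))
      = d * ⟪η, slice H i j w⟫ := by
    intro w η i j
    induction w with
    | zero => simp [ip0l]
    | add u v hu hv => rw [hipT₁, hu, hv, map_add, inner_add_right, mul_add]
    | tmul ξ x =>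
      have : (star (Matrix.single i j (1 : ℂ) * σ⁻¹) * x * σ).trace = x i j := by
        rw [star_mul, hσistar, Matrix.trace_mul_comm, ← mul_assoc, ← mul_assoc,
          Matrix.mul_nonsing_inv _ hσu, one_mul, Matrix.star_eq_conjTranspose,
          Matrix.conjTranspose_single, Matrix.trace_single_mul]
        simp
      rw [hipTt, this, slice_tmul, inner_smul_right]
      ring
  have hstar : ∀ ξ, φRstar ξ = (d : ℂ)⁻¹ •
      ∑ i, ∑ j, B ξ (Matrix.single j i 1) (Matrix.single i j 1) := by
    intro ξ
    have key : ∀ i j, slice H i j (φRstar ξ)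
        = (d : ℂ)⁻¹ • rH (MulOpposite.op (τ⁻¹ * Matrix.single j i 1 * τ⁻¹)) ξ := by
      intro i j
      refine ext_inner_left ℂ fun η => ?_
      have h := hcoord (φRstar ξ) η i j
      have e : star (τ⁻¹ * (Matrix.single i j (1 : ℂ) * σ⁻¹) * τ)
          = τ⁻¹ * Matrix.single j i 1 * τ⁻¹ := by
        rw [← hσinv, mul_assoc, mul_assoc, mul_assoc, t2, mul_one, star_mul, star_mul, hτstar,
          Matrix.star_eq_conjTranspose, Matrix.conjTranspose_single, star_one]
      rw [hadj, hφR, hrstar, e] at h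
      rw [inner_smul_right, h, inv_mul_cancel_left₀ hdC]
    rw [← sum_slice_tmul (φRstar ξ)]
    simp only [key, hB, Finset.smul_sum, TensorProduct.smul_tmul']
  -- `φ_R φ_R* = id` is the normalisation `tr σ⁻¹ = d`
  have hid : ∀ ξ, φR (φRstar ξ) = ξ := by
    intro ξ
    have h : ∀ i j : Fin d, φR (B ξ (Matrix.single j i 1) (Matrix.single i j 1))
        = rH (MulOpposite.op
          (τ⁻¹ * (Matrix.single j i 1 * σ⁻¹ * Matrix.single i j 1) * τ)) ξ := by
      intro i j
      rw [hB, hφR, hmul, ← hσinv]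
      simp only [mul_assoc]
    rw [hstar, map_smul]
    simp only [map_sum, h]
    have h2 : ∑ i : Fin d, ∑ j : Fin d, rH (MulOpposite.op
          (τ⁻¹ * (Matrix.single j i 1 * σ⁻¹ * Matrix.single i j 1) * τ)) ξ
        = rH (MulOpposite.op (τ⁻¹ * (∑ i : Fin d, ∑ j : Fin d,
          Matrix.single j i 1 * σ⁻¹ * Matrix.single i j 1) * τ)) ξ := by
      simp only [Finset.mul_sum, Finset.sum_mul, Finset.op_sum, map_sum,
        LinearMap.sum_apply]
    rw [h2, sum_single_mul_single, htr, mul_smul_comm, mul_one, smul_mul_assoc, t2,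
      MulOpposite.op_smul, map_smul, MulOpposite.op_one, map_one, LinearMap.smul_apply,
      Module.End.one_apply, inv_smul_smul₀ hdC]
  -- `φ_R* φ_R = d⁻¹ ∑ ρ(τ⁻¹ Eⱼᵢ τ⁻¹) ⊗ λ(Eᵢⱼ)`
  have hproj : ∀ u, φRstar (φR u) = (d : ℂ)⁻¹ • ∑ i, ∑ j,
      TensorProduct.map LinearMap.id (LinearMap.mulLeft ℂ (Matrix.single i j 1))
        (TensorProduct.map (rH (MulOpposite.op (τ⁻¹ * Matrix.single j i 1 * τ⁻¹)))
          LinearMap.id u) := by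
    intro u
    induction u with
    | zero => simp
    | add u v hu hv =>
      simp only [map_add, hu, hv, Finset.sum_add_distrib, smul_add]
    | tmul ξ y =>
      rw [hstar, hφR]
      congr 1
      have h : ∀ i j : Fin d, B (rH (MulOpposite.op (τ⁻¹ * y * τ)) ξ) (Matrix.single j i 1)
          (Matrix.single i j 1) = B ξ (y * Matrix.single j i 1) (Matrix.single i j 1) := by
        intro i j
        rw [hB, hB, hmul]
        simp only [mul_assoc, t1']
      simp only [h]
      rw [sum_single_mul_left]
      simp [hB]
  have hrel : ∀ ξ x, TensorProduct.map (rH (MulOpposite.op x)) LinearMap.id (φRstar ξ)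
      = TensorProduct.map LinearMap.id (LinearMap.mulLeft ℂ (τ⁻¹ * x * τ)) (φRstar ξ) := by
    intro ξ x
    rw [hstar, map_smul, map_smul]
    congr 1
    have h : ∀ i j : Fin d, TensorProduct.map (rH (MulOpposite.op x)) LinearMap.id
        (B ξ (Matrix.single j i 1) (Matrix.single i j 1))
        = B ξ (Matrix.single j i 1 * (τ⁻¹ * x * τ)) (Matrix.single i j 1) := by
      intro i j
      rw [hB, hB, TensorProduct.map_tmul, hmul]
      simp only [mul_assoc, t1, mul_one, LinearMap.id_apply]
    simp only [map_sum, h]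
    rw [sum_single_mul_right]
    simp [hB, mul_assoc]
  have hfix : ∀ u, (∀ x, TensorProduct.map (rH (MulOpposite.op x)) LinearMap.id u
        = TensorProduct.map LinearMap.id (LinearMap.mulLeft ℂ (τ⁻¹ * x * τ)) u)
      → φRstar (φR u) = u := by
    intro u hu
    have hl : ∀ (a b : Matrix (Fin d) (Fin d) ℂ) (w : H ⊗[ℂ] Matrix (Fin d) (Fin d) ℂ),
        TensorProduct.map LinearMap.id (LinearMap.mulLeft ℂ a)
          (TensorProduct.map LinearMap.id (LinearMap.mulLeft ℂ b) w)
        = (LinearMap.mulLeft ℂ (a * b)).lTensor H w := by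
      intro a b w
      rw [LinearMap.mulLeft_mul, LinearMap.lTensor_comp]
      rfl
    have hsum : ∑ i : Fin d, ∑ j : Fin d, LinearMap.mulLeft ℂ (Matrix.single i j (1 : ℂ) *
        (τ⁻¹ * (τ⁻¹ * Matrix.single j i 1 * τ⁻¹) * τ)) = (d : ℂ) • LinearMap.id := by
      have h : ∀ i j : Fin d, Matrix.single i j (1 : ℂ) *
        (τ⁻¹ * (τ⁻¹ * Matrix.single j i 1 * τ⁻¹) * τ)
          = Matrix.single i j 1 * σ⁻¹ * Matrix.single j i 1 := by
        intro i j
        rw [← hσinv]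
        simp only [mul_assoc, t2, mul_one]
      ext1 z
      simp only [h, LinearMap.sum_apply, LinearMap.mulLeft_apply, ← Finset.sum_mul]
      rw [Finset.sum_comm, sum_single_mul_single, htr]
      simp
    rw [hproj]
    simp only [hu, hl]
    rw [show (∑ i : Fin d, ∑ j : Fin d, (LinearMap.mulLeft ℂ (Matrix.single i j (1 : ℂ) *
        (τ⁻¹ * (τ⁻¹ * Matrix.single j i 1 * τ⁻¹) * τ))).lTensor H u)
        = (∑ i : Fin d, ∑ j : Fin d, LinearMap.mulLeft ℂ (Matrix.single i j (1 : ℂ) *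
        (τ⁻¹ * (τ⁻¹ * Matrix.single j i 1 * τ⁻¹) * τ))).lTensor H u by
      simp only [← LinearMap.coe_lTensorHom, map_sum, LinearMap.sum_apply], hsum,
      LinearMap.lTensor_smul, LinearMap.lTensor_id, LinearMap.smul_apply, LinearMap.id_apply,
      inv_smul_smul₀ hdC]
  have hsymm : ∀ u v, ipT u v = star (ipT v u) := by
    intro u v
    induction u with
    | zero => simp [ip0l, ip0r]
    | add u₁ u₂ h₁ h₂ => rw [hipT₁, hipT₂, h₁, h₂, star_add]
    | tmul ξ x =>
      induction v with
      | zero => simp [ip0l, ip0r]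
      | add v₁ v₂ h₁ h₂ => rw [hipT₁, hipT₂, h₁, h₂, star_add]
      | tmul η y =>
        have h : star (star x * y * σ).trace = (star y * x * σ).trace := by
          rw [← Matrix.trace_conjTranspose, ← Matrix.star_eq_conjTranspose, star_mul, star_mul,
            star_star, hσstar, Matrix.trace_mul_comm]
        rw [hipTt, hipTt, star_mul', star_mul', h, star_natCast]
        congr 1
        exact (inner_conj_symm η ξ).symm
  refine ⟨hid, fun u => by rw [hid], fun u v => ?_, fun u => ⟨?_, fun h => ⟨u, hfix u h⟩⟩,
    hfix, fun a u => ?_, fun c u => ?_⟩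
  · rw [hadj, hsymm u, hadj]
    exact (inner_conj_symm _ _).symm
  · rintro ⟨w, rfl⟩ x
    exact hrel _ x
  · induction u with
    | zero => simp
    | add u v hu hv => simp only [map_add, hu, hv]
    | tmul ξ x =>
      rw [TensorProduct.map_tmul, hφR, hφR]
      exact (LinearMap.congr_fun (hcomm a (τ⁻¹ * x * τ)) ξ).symm
  · induction u with
    | zero => simp
    | add u v hu hv => simp only [map_add, hu, hv]
    | tmul ξ x =>
      rw [TensorProduct.map_tmul, hφR, hφR, hmul]
      simp [mul_assoc, t2]
end

section
/- Let (M, δ) be a matrix algebra with delta-form, H a finite-dimensional Hilbert-M-bimodule, and let (s_H, t_H) be a solution to the conjugate equations for H with dual H̄. Define Ω_H(ξ) = (δ ∘ t_H* ⊗ id)(id ⊗ ξ ⊗ id) t_H(⟦1⟧) and Ω_H^{-1}(ξ) = (id ⊗ δ ∘ s_H*)(id ⊗ ξ ⊗ id) s_H(⟦1⟧). Then Ω_H and Ω_H^{-1} are mutually inverse linear maps on H, and Ω_H(x·ξ·y) = μ(x)·Ω_H(ξ)·μ(y) for all x, y ∈ M, ξ ∈ H. -/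
/-! Write `p = δ ∘ s* : H ⊗ H̄ → ℂ`, `q = δ ∘ t* : H̄ ⊗ H → ℂ`, `S = s(1)` and `T = t(1)`.

The condition `tr σ⁻¹ = d` says that `∑ bᵢ bᵢ* = 1` for an orthonormal basis `bᵢ` of `L²(M)`
(`onb_sum_mul_star`).  Together with the balancedness and bimodularity of `s*`, `t*`
(`adjoint_bimodular`), this turns the conjugate equations over `(M, δ)` into the ordinary zigzag
identities over `ℂ`: `(p ⊗ id)(id ⊗ T) = id_H` and `(q ⊗ id)(id ⊗ S) = id_H̄`
(`zigzag_of_conj`).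

Now `Ω(ξ) = (q(·, ξ) ⊗ id) T` and `Ω⁻¹(ξ) = (id ⊗ p(ξ, ·)) S`, so contracting first over `S`
and then over `T` gives `Ω ∘ Ω⁻¹ = id`; the other composition follows by finite dimensionality.
For the equivariance, the action on `ξ` is moved across `q` onto the first leg of `T`, and from
there to the second leg of `T`; each move conjugates by `τ`, so together they conjugate by
`τ² = σ`. -/

open scoped ComplexOrder TensorProduct

local notation "⟪" x ", " y "⟫" => @inner ℂ _ _ x y

section Helpers

open MulOpposite

variable {d : ℕ} {ι : Type*} [Fintype ι]

/-! ### Orthonormal bases of `L²(M)` -/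

theorem trace_star_mul_ext {σ Z W : Matrix (Fin d) (Fin d) ℂ} (hσ : IsUnit σ.det)
    (hd : 0 < d)
    (h : ∀ x, (d : ℂ) * (star Z * x * σ).trace = (d : ℂ) * (star W * x * σ).trace) :
    Z = W := by
  have hd' : (d : ℂ) ≠ 0 := by exact_mod_cast hd.ne'
  apply star_injective
  rw [Matrix.ext_iff_trace_mul_right]
  intro x
  have := mul_left_cancel₀ hd' (h (x * σ⁻¹))
  rwa [← mul_assoc, ← mul_assoc, Matrix.nonsing_inv_mul_cancel_right _ _ hσ,
    Matrix.nonsing_inv_mul_cancel_right _ _ hσ] at this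

theorem onb_expand [DecidableEq ι] {σ : Matrix (Fin d) (Fin d) ℂ}
    {b : ι → Matrix (Fin d) (Fin d) ℂ}
    (honb : ∀ i j, (d : ℂ) * ((star (b j)) * (b i) * σ).trace = if i = j then 1 else 0)
    (hspan : Submodule.span ℂ (Set.range b) = ⊤) (X : Matrix (Fin d) (Fin d) ℂ) :
    ∑ i, ((d : ℂ) * (star (b i) * X * σ).trace) • b i = X := by
  have hX : X ∈ Submodule.span ℂ (Set.range b) := hspan ▸ Submodule.mem_top
  induction hX using Submodule.span_induction with
  | mem x hx =>
    obtain ⟨j, rfl⟩ := hx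
    simp [honb]
  | zero => simp
  | add x y _ _ hx hy =>
    conv_rhs => rw [← hx, ← hy]
    simp [mul_add, add_mul, add_smul, Finset.sum_add_distrib]
  | smul a x _ hx =>
    conv_rhs => rw [← hx]
    simp [Finset.smul_sum, smul_smul, mul_left_comm]

/-- The delta-form condition `tr σ⁻¹ = d`, in terms of an orthonormal basis of `L²(M)`:
multiplication is a coisometry. -/
theorem onb_sum_mul_star [DecidableEq ι] {σ : Matrix (Fin d) (Fin d) ℂ} (hd : 0 < d)
    (hσ : IsUnit σ.det) (htr : (σ⁻¹).trace = (d : ℂ))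
    {b : ι → Matrix (Fin d) (Fin d) ℂ}
    (honb : ∀ i j, (d : ℂ) * ((star (b j)) * (b i) * σ).trace = if i = j then 1 else 0)
    (hspan : Submodule.span ℂ (Set.range b) = ⊤) :
    ∑ i, b i * star (b i) = 1 := by
  have hd' : (d : ℂ) ≠ 0 := by exact_mod_cast hd.ne'
  ext m k
  -- expanding `E_{kl} σ⁻¹` in the basis and reading off its `(m, l)` entry
  have key : ∀ l, (d : ℂ) * ∑ i, star (b i k l) * b i m l = if k = m then σ⁻¹ l l else 0 := by
    intro l
    have h := congrFun (congrFun
      (onb_expand honb hspan (Matrix.single k l (1 : ℂ) * σ⁻¹)) m) l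
    have h2 : ∀ i, (star (b i) * (Matrix.single k l (1 : ℂ) * σ⁻¹) * σ).trace
        = star (b i k l) := by
      intro i
      rw [← mul_assoc, Matrix.nonsing_inv_mul_cancel_right _ _ hσ, Matrix.trace_mul_single]
      simp [Matrix.star_apply]
    simp only [h2, Matrix.sum_apply, Matrix.smul_apply, smul_eq_mul] at h
    rw [Finset.mul_sum]
    simp only [← mul_assoc, h]
    split_ifs with hk
    · subst hk; simp
    · rw [Matrix.single_mul_apply_of_ne]; exact fun h => hk h.symm
  have h3 : (d : ℂ) * (∑ i, b i * star (b i)) m k = if k = m then (d : ℂ) else 0 := by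
    have : (∑ i, b i * star (b i)) m k = ∑ l, ∑ i, star (b i k l) * b i m l := by
      rw [Finset.sum_comm]
      simp [Matrix.sum_apply, Matrix.mul_apply, Matrix.star_apply, mul_comm]
    rw [this, Finset.mul_sum, Finset.sum_congr rfl fun l _ => key l]
    split_ifs
    · simpa [Matrix.trace] using htr
    · simp
  apply mul_left_cancel₀ hd'
  rw [h3, Matrix.one_apply]
  by_cases h : m = k
  · simp [h]
  · simp [h, Ne.symm h]

/-! ### Contractions and adjoints on tensor products -/

theorem lift_map_eq {E F G : Type*} [AddCommGroup E] [Module ℂ E] [AddCommGroup F] [Module ℂ F]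
    [AddCommGroup G] [Module ℂ G] {κ : Type*} [Fintype κ]
    (K : κ → E →ₗ[ℂ] F →ₗ[ℂ] G) (A : κ → E →ₗ[ℂ] E) (B : κ → F →ₗ[ℂ] F)
    (K' : E →ₗ[ℂ] F →ₗ[ℂ] G) (h : ∀ x y, ∑ i, K i (A i x) (B i y) = K' x y) (u : E ⊗[ℂ] F) :
    ∑ i, TensorProduct.lift (K i) (TensorProduct.map (A i) (B i) u)
      = TensorProduct.lift K' u := by
  induction u with
  | zero => simp
  | add u v hu hv => simp [Finset.sum_add_distrib, hu, hv]
  | tmul x y => simpa using h x y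

theorem lift_map_eq_one {E F G : Type*} [AddCommGroup E] [Module ℂ E] [AddCommGroup F]
    [Module ℂ F] [AddCommGroup G] [Module ℂ G]
    (K : E →ₗ[ℂ] F →ₗ[ℂ] G) (A : E →ₗ[ℂ] E) (B : F →ₗ[ℂ] F)
    (K' : E →ₗ[ℂ] F →ₗ[ℂ] G) (h : ∀ x y, K (A x) (B y) = K' x y) (u : E ⊗[ℂ] F) :
    TensorProduct.lift K (TensorProduct.map A B u) = TensorProduct.lift K' u := by
  simpa using lift_map_eq (κ := Unit) (fun _ => K) (fun _ => A) (fun _ => B) K'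
    (by simpa using h) u

/-- On simple tensors `ip` is the inner product with its arguments exchanged, so it moves `A ⊗ B`
to its adjoint `A' ⊗ B'`. -/
theorem ip_map {E F : Type*} [NormedAddCommGroup E] [InnerProductSpace ℂ E]
    [NormedAddCommGroup F] [InnerProductSpace ℂ F]
    (ip : (E ⊗[ℂ] F) → (E ⊗[ℂ] F) → ℂ)
    (h₁ : ∀ u v w, ip (u + v) w = ip u w + ip v w)
    (h₂ : ∀ u v w, ip u (v + w) = ip u v + ip u w)
    (ht : ∀ (ξ ξ' : E) (η η' : F), ip (ξ ⊗ₜ[ℂ] η) (ξ' ⊗ₜ[ℂ] η') = ⟪ξ', ξ⟫ * ⟪η', η⟫)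
    (A A' : E →ₗ[ℂ] E) (B B' : F →ₗ[ℂ] F)
    (hA : ∀ x y, ⟪A x, y⟫ = ⟪x, A' y⟫) (hB : ∀ x y, ⟪B x, y⟫ = ⟪x, B' y⟫)
    (u v : E ⊗[ℂ] F) :
    ip (TensorProduct.map A' B' u) v = ip u (TensorProduct.map A B v) := by
  have z₁ : ∀ w, ip 0 w = 0 := fun w => by simpa using h₁ 0 0 w
  have z₂ : ∀ w, ip w 0 = 0 := fun w => by simpa using h₂ w 0 0
  induction u with
  | zero => simp [z₁]
  | add u u' hu hu' => simp [h₁, hu, hu']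
  | tmul x y =>
    induction v with
    | zero => simp [z₂]
    | add v v' hv hv' => rw [map_add, h₂, h₂, hv, hv']
    | tmul x' y' => simp [ht, hA, hB]

/-- The adjoint of a bimodular map `L²(M) → E ⊗_{(M,δ)} F` is balanced over `M` (with the
twist by `τ`) and bimodular. -/
theorem adjoint_bimodular {E F : Type*} [NormedAddCommGroup E] [InnerProductSpace ℂ E]
    [NormedAddCommGroup F] [InnerProductSpace ℂ F] (hd : 0 < d)
    {σ τ : Matrix (Fin d) (Fin d) ℂ} (hσ : IsUnit σ.det) (hτ : IsUnit τ.det)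
    (hτs : star τ = τ) (hττ : τ * τ = σ)
    (lE : Matrix (Fin d) (Fin d) ℂ →ₐ[ℂ] Module.End ℂ E)
    (rE : (Matrix (Fin d) (Fin d) ℂ)ᵐᵒᵖ →ₐ[ℂ] Module.End ℂ E)
    (lF : Matrix (Fin d) (Fin d) ℂ →ₐ[ℂ] Module.End ℂ F)
    (rF : (Matrix (Fin d) (Fin d) ℂ)ᵐᵒᵖ →ₐ[ℂ] Module.End ℂ F)
    (hlE : ∀ x (ξ η : E), ⟪lE x ξ, η⟫ = ⟪ξ, lE (star x) η⟫)
    (hrE : ∀ y (ξ η : E), ⟪rE (op y) ξ, η⟫ = ⟪ξ, rE (op (star y)) η⟫)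
    (hlF : ∀ x (ξ η : F), ⟪lF x ξ, η⟫ = ⟪ξ, lF (star x) η⟫)
    (hrF : ∀ y (ξ η : F), ⟪rF (op y) ξ, η⟫ = ⟪ξ, rF (op (star y)) η⟫)
    (s : Matrix (Fin d) (Fin d) ℂ →ₗ[ℂ] E ⊗[ℂ] F)
    (sstar : E ⊗[ℂ] F →ₗ[ℂ] Matrix (Fin d) (Fin d) ℂ)
    (ip : (E ⊗[ℂ] F) → (E ⊗[ℂ] F) → ℂ)
    (h₁ : ∀ u v w, ip (u + v) w = ip u w + ip v w)
    (h₂ : ∀ u v w, ip u (v + w) = ip u v + ip u w)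
    (ht : ∀ (ξ ξ' : E) (η η' : F), ip (ξ ⊗ₜ[ℂ] η) (ξ' ⊗ₜ[ℂ] η') = ⟪ξ', ξ⟫ * ⟪η', η⟫)
    (hadj : ∀ x u, ip (s x) u = (d : ℂ) * ((star (sstar u)) * x * σ).trace)
    (hbim : ∀ (a c x : Matrix (Fin d) (Fin d) ℂ),
      s (a * x * (τ * c * τ⁻¹)) = TensorProduct.map (lE a) (rF (op c)) (s x))
    (hrel : ∀ (x c : Matrix (Fin d) (Fin d) ℂ),
      TensorProduct.map (rE (op c)) LinearMap.id (s x)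
        = TensorProduct.map LinearMap.id (lF (τ⁻¹ * c * τ)) (s x)) :
    (∀ c ξ η, sstar (rE (op c) ξ ⊗ₜ[ℂ] η) = sstar (ξ ⊗ₜ[ℂ] lF (τ * c * τ⁻¹) η)) ∧
    (∀ a ξ η, sstar (lE a ξ ⊗ₜ[ℂ] η) = a * sstar (ξ ⊗ₜ[ℂ] η)) ∧
    (∀ c ξ η, sstar (ξ ⊗ₜ[ℂ] rF (op c) η) = sstar (ξ ⊗ₜ[ℂ] η) * (τ * c * τ⁻¹)) := by
  have hτi : star τ⁻¹ = τ⁻¹ := by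
    rw [Matrix.star_eq_conjTranspose, Matrix.conjTranspose_nonsing_inv,
      ← Matrix.star_eq_conjTranspose, hτs]
  refine ⟨fun c ξ η => ?_, fun a ξ η => ?_, fun c ξ η => ?_⟩
  · apply trace_star_mul_ext hσ hd
    intro x
    rw [← hadj, ← hadj]
    have e1 := ip_map ip h₁ h₂ ht (rE (op c)) (rE (op (star c))) LinearMap.id LinearMap.id
      (hrE c) (fun _ _ => rfl) (s x) (ξ ⊗ₜ η)
    have e2 := ip_map ip h₁ h₂ ht LinearMap.id LinearMap.id (lF (τ * c * τ⁻¹))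
      (lF (star (τ * c * τ⁻¹))) (fun _ _ => rfl) (hlF _) (s x) (ξ ⊗ₜ η)
    simp only [TensorProduct.map_tmul, LinearMap.id_apply] at e1 e2
    rw [← e1, ← e2, hrel, star_mul, star_mul, hτs, hτi, mul_assoc]
  · apply trace_star_mul_ext hσ hd
    intro x
    have e1 := ip_map ip h₁ h₂ ht (lE a) (lE (star a)) (rF (op 1)) (rF (op (star 1)))
      (hlE a) (hrF 1) (s x) (ξ ⊗ₜ η)
    rw [star_one, ← hbim, hadj] at e1
    simp only [TensorProduct.map_tmul, op_one, map_one, Module.End.one_apply] at e1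
    rw [← hadj, ← e1, star_mul, mul_one, Matrix.mul_nonsing_inv _ hτ, mul_one]
    simp only [mul_assoc]
  · apply trace_star_mul_ext hσ hd
    intro x
    have e1 := ip_map ip h₁ h₂ ht (lE 1) (lE (star 1)) (rF (op c)) (rF (op (star c)))
      (hlE 1) (hrF c) (s x) (ξ ⊗ₜ η)
    rw [star_one, ← hbim, hadj] at e1
    simp only [TensorProduct.map_tmul, map_one, Module.End.one_apply] at e1
    rw [← hadj, ← e1, star_mul, star_mul, star_mul, hτs, hτi, one_mul, ← hττ]
    congr 1
    rw [show star (sstar (ξ ⊗ₜ[ℂ] η)) * (x * (τ * star c * τ⁻¹)) * (τ * τ)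
        = (star (sstar (ξ ⊗ₜ[ℂ] η)) * x * τ * star c) * (τ⁻¹ * τ) * τ by
          simp only [mul_assoc],
      show τ⁻¹ * (star c * τ) * star (sstar (ξ ⊗ₜ[ℂ] η)) * x * (τ * τ)
        = τ⁻¹ * ((star c * τ) * (star (sstar (ξ ⊗ₜ[ℂ] η)) * x * τ) * τ) by
          simp only [mul_assoc],
      Matrix.nonsing_inv_mul _ hτ, mul_one, Matrix.trace_mul_comm τ⁻¹,
      mul_assoc _ τ τ⁻¹, Matrix.mul_nonsing_inv _ hτ, mul_one, mul_assoc,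
      Matrix.trace_mul_comm]

/-! ### From the conjugate equations to zigzag identities over `ℂ` -/

/-- The conjugate equation over `(M,δ)` collapses to the ordinary zigzag identity over `ℂ` for
the pairing `δ ∘ s*` and the tensor `t(1)`. -/
theorem zigzag_of_conj {E F : Type*} [AddCommGroup E] [Module ℂ E]
    [AddCommGroup F] [Module ℂ F] [DecidableEq ι] (hd : 0 < d)
    {σ τ : Matrix (Fin d) (Fin d) ℂ} (hσ : IsUnit σ.det) (hτ : IsUnit τ.det)
    (htr : (σ⁻¹).trace = (d : ℂ))
    (hτs : star τ = τ) (hττ : τ * τ = σ)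
    (lE : Matrix (Fin d) (Fin d) ℂ →ₐ[ℂ] Module.End ℂ E)
    (rE : (Matrix (Fin d) (Fin d) ℂ)ᵐᵒᵖ →ₐ[ℂ] Module.End ℂ E)
    (lF : Matrix (Fin d) (Fin d) ℂ →ₐ[ℂ] Module.End ℂ F)
    (rF : (Matrix (Fin d) (Fin d) ℂ)ᵐᵒᵖ →ₐ[ℂ] Module.End ℂ F)
    (dl : Matrix (Fin d) (Fin d) ℂ →ₗ[ℂ] ℂ)
    (hdl : ∀ z, dl z = (d : ℂ) * (z * σ).trace)
    (b : ι → Matrix (Fin d) (Fin d) ℂ)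
    (honb : ∀ i j, (d : ℂ) * ((star (b j)) * (b i) * σ).trace = if i = j then 1 else 0)
    (hspan : Submodule.span ℂ (Set.range b) = ⊤)
    (sstar : E ⊗[ℂ] F →ₗ[ℂ] Matrix (Fin d) (Fin d) ℂ)
    (t : Matrix (Fin d) (Fin d) ℂ →ₗ[ℂ] F ⊗[ℂ] E)
    (hs₁ : ∀ c ξ η, sstar (rE (op c) ξ ⊗ₜ[ℂ] η) = sstar (ξ ⊗ₜ[ℂ] lF (τ * c * τ⁻¹) η))
    (hs₂ : ∀ a ξ η, sstar (lE a ξ ⊗ₜ[ℂ] η) = a * sstar (ξ ⊗ₜ[ℂ] η))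
    (hs₃ : ∀ c ξ η, sstar (ξ ⊗ₜ[ℂ] rF (op c) η) = sstar (ξ ⊗ₜ[ℂ] η) * (τ * c * τ⁻¹))
    (hbim : ∀ (a c x : Matrix (Fin d) (Fin d) ℂ),
      t (a * x * (τ * c * τ⁻¹)) = TensorProduct.map (lF a) (rE (op c)) (t x))
    (hrel : ∀ (x c : Matrix (Fin d) (Fin d) ℂ),
      TensorProduct.map (rF (op c)) LinearMap.id (t x)
        = TensorProduct.map LinearMap.id (lE (τ⁻¹ * c * τ)) (t x))
    (φL : Matrix (Fin d) (Fin d) ℂ ⊗[ℂ] E →ₗ[ℂ] E)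
    (hφL : ∀ x (ξ : E), φL (x ⊗ₜ[ℂ] ξ) = lE x ξ)
    (φRs : E →ₗ[ℂ] E ⊗[ℂ] Matrix (Fin d) (Fin d) ℂ)
    (hφRs : ∀ ξ, φRs ξ = ∑ i, (rE (op (b i)) ξ) ⊗ₜ[ℂ] star (τ⁻¹ * (b i) * τ))
    (hconj : ∀ ξ : E, φL (TensorProduct.map sstar LinearMap.id
      ((TensorProduct.assoc ℂ E F E).symm
        (TensorProduct.map LinearMap.id t (φRs ξ)))) = ξ) (ξ : E) :
    TensorProduct.lift (LinearMap.smulRight (dl.comp (sstar.comp (TensorProduct.mk ℂ E F ξ)))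
      (LinearMap.id : E →ₗ[ℂ] E)) (t 1) = ξ := by
  have hτi : star τ⁻¹ = τ⁻¹ := by
    rw [Matrix.star_eq_conjTranspose, Matrix.conjTranspose_nonsing_inv,
      ← Matrix.star_eq_conjTranspose, hτs]
  have hB := onb_sum_mul_star hd hσ htr honb hspan
  have ht : ∀ y, t y = TensorProduct.map (lF y) LinearMap.id (t 1) := by
    intro y
    have := hbim y 1 1
    rwa [mul_one, mul_one, Matrix.mul_nonsing_inv _ hτ, mul_one, op_one, map_one] at this
  let K : E → F →ₗ[ℂ] E →ₗ[ℂ] E := fun ζ =>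
    lE.toLinearMap.comp (sstar.comp (TensorProduct.mk ℂ E F ζ))
  let p : E → F →ₗ[ℂ] E →ₗ[ℂ] E := fun ζ =>
    LinearMap.smulRight (dl.comp (sstar.comp (TensorProduct.mk ℂ E F ζ)))
      (LinearMap.id : E →ₗ[ℂ] E)
  have hφ : ∀ (ζ : E) (u : F ⊗[ℂ] E), φL (TensorProduct.map sstar LinearMap.id
      ((TensorProduct.assoc ℂ E F E).symm (ζ ⊗ₜ u))) = TensorProduct.lift (K ζ) u := by
    intro ζ u
    induction u with
    | zero => simp
    | add u v hu hv => simp only [TensorProduct.tmul_add, map_add, hu, hv]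
    | tmul x y => simp [K, hφL]
  -- balancedness of `s*` and `∑ bᵢ bᵢ* = 1` remove the sum coming from `φ_R*`
  have hK : TensorProduct.lift (K ξ) (t 1) = ξ := by
    conv_rhs => rw [← hconj ξ]
    rw [hφRs]
    simp only [map_sum, TensorProduct.map_tmul, hφ, LinearMap.id_apply]
    simp only [ht (star _)]
    symm
    apply lift_map_eq
    intro x y
    have h1 : ∀ i, sstar (rE (op (b i)) ξ ⊗ₜ[ℂ] lF (star (τ⁻¹ * b i * τ)) x)
        = sstar (rE (op (b i * star (b i))) ξ ⊗ₜ[ℂ] x) := by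
      intro i
      rw [op_mul, map_mul, Module.End.mul_apply, hs₁ (star (b i)), star_mul, star_mul, hτs,
        hτi, mul_assoc]
    simp only [K, LinearMap.comp_apply, TensorProduct.mk_apply, h1, LinearMap.id_apply,
      AlgHom.toLinearMap_apply]
    rw [← LinearMap.sum_apply, ← map_sum, ← map_sum, ← TensorProduct.sum_tmul,
      ← LinearMap.sum_apply, ← map_sum, ← Finset.op_sum, hB, op_one, map_one, Module.End.one_apply]
  change TensorProduct.lift (p ξ) (t 1) = ξ
  refine Eq.trans ?_ hK
  -- expand `s*(ξ ⊗ η)` in the orthonormal basis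
  have hX : TensorProduct.lift (K ξ) (t 1)
      = ∑ i, TensorProduct.lift (p (lE (star (b i)) ξ))
        (TensorProduct.map LinearMap.id (lE (b i)) (t 1)) := by
    symm
    apply lift_map_eq
    intro x y
    conv_rhs =>
      simp only [K, LinearMap.comp_apply, TensorProduct.mk_apply, AlgHom.toLinearMap_apply]
      rw [← onb_expand honb hspan (sstar (ξ ⊗ₜ x))]
    simp [p, hs₂, hdl]
  have hr : ∀ i, TensorProduct.map LinearMap.id (lE (b i)) (t 1)
      = TensorProduct.map (rF (op (τ * b i * τ⁻¹))) LinearMap.id (t 1) := by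
    intro i
    rw [hrel, show τ⁻¹ * (τ * b i * τ⁻¹) * τ = (τ⁻¹ * τ) * b i * (τ⁻¹ * τ) by
      simp only [mul_assoc], Matrix.nonsing_inv_mul _ hτ, one_mul, mul_one]
  rw [hX]
  simp only [hr]
  -- `b` returns to the right of `s*` as `σ b σ⁻¹`, which `δ` cycles back to `b b*`
  symm
  apply lift_map_eq
  intro x y
  simp only [p, LinearMap.smulRight_apply, LinearMap.comp_apply, TensorProduct.mk_apply,
    LinearMap.smul_apply, LinearMap.id_apply, hs₂, hs₃, hdl]
  rw [← Finset.sum_smul, ← Finset.mul_sum]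
  congr 2
  have h2 : ∀ i, (star (b i) * (sstar (ξ ⊗ₜ[ℂ] x) * (τ * (τ * b i * τ⁻¹) * τ⁻¹)) * σ).trace
      = (sstar (ξ ⊗ₜ[ℂ] x) * σ * (b i * star (b i))).trace := by
    intro i
    rw [← hττ, show star (b i) * (sstar (ξ ⊗ₜ[ℂ] x) * (τ * (τ * b i * τ⁻¹) * τ⁻¹)) * (τ * τ)
        = star (b i) * (sstar (ξ ⊗ₜ[ℂ] x) * (τ * τ) * b i) * τ⁻¹ * (τ⁻¹ * τ) * τ by
          simp only [mul_assoc],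
      Matrix.nonsing_inv_mul _ hτ, mul_one, mul_assoc _ τ⁻¹ τ, Matrix.nonsing_inv_mul _ hτ,
      mul_one, Matrix.trace_mul_comm]
    simp only [mul_assoc]
  rw [Finset.sum_congr rfl fun i _ => h2 i, ← Matrix.trace_sum, ← Finset.mul_sum, hB, mul_one]

end Helpers

/-! ### The map `Ω` -/

/-- Let `(M,δ)` be a matrix algebra with delta-form `δ(x) = d·tr(xσ)`
(`τ = σ^{1/2}`, `μ^{±1/2}(x) = τ^{∓1} x τ^{±1}`, `μ(x) = σ⁻¹ x σ`), `H` a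
finite-dimensional Hilbert-`M`-bimodule with dual bimodule `H̄ = Hb`, and `(s, t)` a
solution of the conjugate equations for `H` (with adjoints `s*, t*`).  Define
`Ω_H(ξ) = (δ ∘ t* ⊗ id)(id ⊗ ξ ⊗ id) t(⟦1⟧)` and
`Ω_H⁻¹(ξ) = (id ⊗ δ ∘ s*)(id ⊗ ξ ⊗ id) s(⟦1⟧)`.  Then `Ω_H` and `Ω_H⁻¹` are mutually
inverse, and `Ω_H(x·ξ·y) = μ(x)·Ω_H(ξ)·μ(y)` for all `x, y ∈ M`, `ξ ∈ H`. -/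
theorem stmt13 (d : ℕ) (hd : 0 < d)
    (σ τ : Matrix (Fin d) (Fin d) ℂ) (hσ : σ.PosDef)
    (htr : (σ⁻¹).trace = (d : ℂ))
    (hτ : τ.PosDef) (hττ : τ * τ = σ)
    {H Hb : Type*} [NormedAddCommGroup H] [InnerProductSpace ℂ H]
    [FiniteDimensional ℂ H] [NormedAddCommGroup Hb] [InnerProductSpace ℂ Hb]
    [FiniteDimensional ℂ Hb]
    -- the bimodule actions on H and on its conjugate Hb
    (lH : Matrix (Fin d) (Fin d) ℂ →ₐ[ℂ] Module.End ℂ H)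
    (rH : (Matrix (Fin d) (Fin d) ℂ)ᵐᵒᵖ →ₐ[ℂ] Module.End ℂ H)
    (lHb : Matrix (Fin d) (Fin d) ℂ →ₐ[ℂ] Module.End ℂ Hb)
    (rHb : (Matrix (Fin d) (Fin d) ℂ)ᵐᵒᵖ →ₐ[ℂ] Module.End ℂ Hb)
    (hHcomm : ∀ x y, lH x * rH (MulOpposite.op y) = rH (MulOpposite.op y) * lH x)
    (hHbcomm : ∀ x y, lHb x * rHb (MulOpposite.op y) = rHb (MulOpposite.op y) * lHb x)
    (hlHstar : ∀ x (ξ η : H), ⟪lH x ξ, η⟫ = ⟪ξ, lH (star x) η⟫)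
    (hrHstar : ∀ y (ξ η : H), ⟪rH (MulOpposite.op y) ξ, η⟫ =
      ⟪ξ, rH (MulOpposite.op (star y)) η⟫)
    (hlHbstar : ∀ x (ξ η : Hb), ⟪lHb x ξ, η⟫ = ⟪ξ, lHb (star x) η⟫)
    (hrHbstar : ∀ y (ξ η : Hb), ⟪rHb (MulOpposite.op y) ξ, η⟫ =
      ⟪ξ, rHb (MulOpposite.op (star y)) η⟫)
    -- the delta-form as a linear functional
    (dl : Matrix (Fin d) (Fin d) ℂ →ₗ[ℂ] ℂ)
    (hdl : ∀ z, dl z = (d : ℂ) * (z * σ).trace)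
    -- an orthonormal basis of L²(M)
    {ι : Type*} [Fintype ι] [DecidableEq ι] (b : ι → Matrix (Fin d) (Fin d) ℂ)
    (honb : ∀ i j, (d : ℂ) * ((star (b j)) * (b i) * σ).trace = if i = j then 1 else 0)
    (hspan : Submodule.span ℂ (Set.range b) = ⊤)
    -- s, t and their adjoints
    (s : Matrix (Fin d) (Fin d) ℂ →ₗ[ℂ] H ⊗[ℂ] Hb)
    (t : Matrix (Fin d) (Fin d) ℂ →ₗ[ℂ] Hb ⊗[ℂ] H)
    (sstar : H ⊗[ℂ] Hb →ₗ[ℂ] Matrix (Fin d) (Fin d) ℂ)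
    (tstar : Hb ⊗[ℂ] H →ₗ[ℂ] Matrix (Fin d) (Fin d) ℂ)
    -- the inner products on the tensor products, linear in the first variable
    (ipHHb : (H ⊗[ℂ] Hb) → (H ⊗[ℂ] Hb) → ℂ)
    (hipHHb₁ : ∀ u v w, ipHHb (u + v) w = ipHHb u w + ipHHb v w)
    (hipHHb₂ : ∀ u v w, ipHHb u (v + w) = ipHHb u v + ipHHb u w)
    (hipHHbt : ∀ (ξ ξ' : H) (η η' : Hb),
      ipHHb (ξ ⊗ₜ[ℂ] η) (ξ' ⊗ₜ[ℂ] η') = ⟪ξ', ξ⟫ * ⟪η', η⟫)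
    (ipHbH : (Hb ⊗[ℂ] H) → (Hb ⊗[ℂ] H) → ℂ)
    (hipHbH₁ : ∀ u v w, ipHbH (u + v) w = ipHbH u w + ipHbH v w)
    (hipHbH₂ : ∀ u v w, ipHbH u (v + w) = ipHbH u v + ipHbH u w)
    (hipHbHt : ∀ (η η' : Hb) (ξ ξ' : H),
      ipHbH (η ⊗ₜ[ℂ] ξ) (η' ⊗ₜ[ℂ] ξ') = ⟪η', η⟫ * ⟪ξ', ξ⟫)
    -- s* and t* are the adjoints of s and t
    (hsadj : ∀ x u, ipHHb (s x) u = (d : ℂ) * ((star (sstar u)) * x * σ).trace)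
    (htadj : ∀ x u, ipHbH (t x) u = (d : ℂ) * ((star (tstar u)) * x * σ).trace)
    -- s and t are M-bimodular
    (hsbim : ∀ (a c x : Matrix (Fin d) (Fin d) ℂ),
      s (a * x * (τ * c * τ⁻¹))
        = TensorProduct.map (lH a) (rHb (MulOpposite.op c)) (s x))
    (htbim : ∀ (a c x : Matrix (Fin d) (Fin d) ℂ),
      t (a * x * (τ * c * τ⁻¹))
        = TensorProduct.map (lHb a) (rH (MulOpposite.op c)) (t x))
    -- s and t take values in the relative tensor products
    (hsrel : ∀ (x c : Matrix (Fin d) (Fin d) ℂ),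
      TensorProduct.map (rH (MulOpposite.op c)) LinearMap.id (s x)
        = TensorProduct.map LinearMap.id (lHb (τ⁻¹ * c * τ)) (s x))
    (htrel : ∀ (x c : Matrix (Fin d) (Fin d) ℂ),
      TensorProduct.map (rHb (MulOpposite.op c)) LinearMap.id (t x)
        = TensorProduct.map LinearMap.id (lH (τ⁻¹ * c * τ)) (t x))
    -- the structure maps φ_L, φ_R*
    (φLH : Matrix (Fin d) (Fin d) ℂ ⊗[ℂ] H →ₗ[ℂ] H)
    (hφLH : ∀ x (ξ : H), φLH (x ⊗ₜ[ℂ] ξ) = lH x ξ)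
    (φLHb : Matrix (Fin d) (Fin d) ℂ ⊗[ℂ] Hb →ₗ[ℂ] Hb)
    (hφLHb : ∀ x (η : Hb), φLHb (x ⊗ₜ[ℂ] η) = lHb x η)
    (φRsH : H →ₗ[ℂ] H ⊗[ℂ] Matrix (Fin d) (Fin d) ℂ)
    (hφRsH : ∀ ξ, φRsH ξ = ∑ i, (rH (MulOpposite.op (b i)) ξ) ⊗ₜ[ℂ]
      star (τ⁻¹ * (b i) * τ))
    (φRsHb : Hb →ₗ[ℂ] Hb ⊗[ℂ] Matrix (Fin d) (Fin d) ℂ)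
    (hφRsHb : ∀ η, φRsHb η = ∑ i, (rHb (MulOpposite.op (b i)) η) ⊗ₜ[ℂ]
      star (τ⁻¹ * (b i) * τ))
    -- the conjugate equations
    (hconj₁ : ∀ ξ : H, φLH (TensorProduct.map sstar LinearMap.id
      ((TensorProduct.assoc ℂ H Hb H).symm
        (TensorProduct.map LinearMap.id t (φRsH ξ)))) = ξ)
    (hconj₂ : ∀ η : Hb, φLHb (TensorProduct.map tstar LinearMap.id
      ((TensorProduct.assoc ℂ Hb H Hb).symm
        (TensorProduct.map LinearMap.id s (φRsHb η)))) = η)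
    -- Ω and its claimed inverse
    (Ω Ωinv : H → H)
    (hΩ : ∀ ξ : H, Ω ξ = TensorProduct.lift
      (LinearMap.smulRight ((dl.comp tstar).comp ((TensorProduct.mk ℂ Hb H).flip ξ))
        (LinearMap.id : H →ₗ[ℂ] H)) (t 1))
    (hΩinv : ∀ ξ : H, Ωinv ξ = TensorProduct.lift
      ((LinearMap.smulRight ((dl.comp sstar).comp (TensorProduct.mk ℂ H Hb ξ))
        (LinearMap.id : H →ₗ[ℂ] H)).flip) (s 1)) :
    (∀ ξ, Ω (Ωinv ξ) = ξ ∧ Ωinv (Ω ξ) = ξ) ∧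
      (∀ (x y : Matrix (Fin d) (Fin d) ℂ) (ξ : H),
        Ω (lH x (rH (MulOpposite.op y) ξ))
          = lH (σ⁻¹ * x * σ) (rH (MulOpposite.op (σ⁻¹ * y * σ)) (Ω ξ))) := by
  have hσd : IsUnit σ.det := (Matrix.isUnit_iff_isUnit_det _).1 hσ.isUnit
  have hτd : IsUnit τ.det := (Matrix.isUnit_iff_isUnit_det _).1 hτ.isUnit
  have hτs : star τ = τ := hτ.isHermitian
  obtain ⟨s₁, s₂, s₃⟩ := adjoint_bimodular hd hσd hτd hτs hττ lH rH lHb rHb hlHstar hrHstar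
    hlHbstar hrHbstar s sstar ipHHb hipHHb₁ hipHHb₂ hipHHbt hsadj hsbim hsrel
  obtain ⟨t₁, t₂, t₃⟩ := adjoint_bimodular hd hσd hτd hτs hττ lHb rHb lH rH hlHbstar hrHbstar
    hlHstar hrHstar t tstar ipHbH hipHbH₁ hipHbH₂ hipHbHt htadj htbim htrel
  have E₁ := zigzag_of_conj hd hσd hτd htr hτs hττ lH rH lHb rHb dl hdl b honb hspan sstar t
    s₁ s₂ s₃ htbim htrel φLH hφLH φRsH hφRsH hconj₁
  have E₂ := zigzag_of_conj hd hσd hτd htr hτs hττ lHb rHb lH rH dl hdl b honb hspan tstar s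
    t₁ t₂ t₃ hsbim hsrel φLHb hφLHb φRsHb hφRsHb hconj₂
  let Q : H → Hb →ₗ[ℂ] H →ₗ[ℂ] H := fun ξ =>
    LinearMap.smulRight ((dl.comp tstar).comp ((TensorProduct.mk ℂ Hb H).flip ξ))
      (LinearMap.id : H →ₗ[ℂ] H)
  replace hΩ : ∀ ξ, Ω ξ = TensorProduct.lift (Q ξ) (t 1) := hΩ
  have hQadd : ∀ ξ ζ, Q (ξ + ζ) = Q ξ + Q ζ := by
    intro ξ ζ; ext x y; simp [Q, add_smul]
  have hQsmul : ∀ (c : ℂ) ξ, Q (c • ξ) = c • Q ξ := by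
    intro c ξ; ext x y; simp [Q, smul_smul]
  let Ql : H →ₗ[ℂ] Hb →ₗ[ℂ] H →ₗ[ℂ] H :=
    { toFun := Q, map_add' := hQadd, map_smul' := hQsmul }
  let ΩL : H →ₗ[ℂ] H := ((LinearMap.applyₗ (t 1)).comp
    (TensorProduct.lift.equiv (.id ℂ) Hb H H).toLinearMap).comp Ql
  have hΩL : ∀ ξ, ΩL ξ = Ω ξ := by
    intro ξ
    rw [hΩ]
    rfl
  have hinv : ∀ ξ, Ω (Ωinv ξ) = ξ := by
    intro ξ
    -- the contraction over `S` may be carried out inside the one over `T`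
    have key : ∀ (η : Hb) (u : H ⊗[ℂ] Hb),
        dl (tstar (η ⊗ₜ TensorProduct.lift
          ((LinearMap.smulRight ((dl.comp sstar).comp (TensorProduct.mk ℂ H Hb ξ))
            (LinearMap.id : H →ₗ[ℂ] H)).flip) u))
        = dl (sstar (ξ ⊗ₜ TensorProduct.lift
          (LinearMap.smulRight (dl.comp (tstar.comp (TensorProduct.mk ℂ Hb H η)))
            (LinearMap.id : Hb →ₗ[ℂ] Hb)) u)) := by
      intro η u
      induction u with
      | zero => simp
      | add u v hu hv => simp only [map_add, TensorProduct.tmul_add, hu, hv]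
      | tmul a c => simp [mul_comm]
    have h := lift_map_eq_one (Q (Ωinv ξ)) LinearMap.id LinearMap.id
      (LinearMap.smulRight (dl.comp (sstar.comp (TensorProduct.mk ℂ H Hb ξ)))
        (LinearMap.id : H →ₗ[ℂ] H)) (fun η ζ => by
          have h' := key η (s 1)
          rw [E₂, ← hΩinv] at h'
          simp [Q, h']) (t 1)
    rw [E₁, TensorProduct.map_id, LinearMap.id_apply] at h
    rw [hΩ, h]
  have hsurj : Function.Surjective ΩL := fun ξ => ⟨Ωinv ξ, by rw [hΩL, hinv]⟩
  have hinj : Function.Injective ΩL := LinearMap.injective_iff_surjective.2 hsurj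
  refine ⟨fun ξ => ⟨hinv ξ, hinj ?_⟩, fun x y ξ => ?_⟩
  · rw [hΩL, hΩL, hinv]
  · have hσi : σ⁻¹ = τ⁻¹ * τ⁻¹ := by rw [← hττ, Matrix.mul_inv_rev]
    have hl : ∀ x ζ, Ω (lH x ζ) = lH (σ⁻¹ * x * σ) (Ω ζ) := by
      intro x ζ
      have e1 : Ω (lH x ζ) = TensorProduct.lift (Q ζ)
          (TensorProduct.map (rHb (MulOpposite.op (τ⁻¹ * x * τ))) LinearMap.id (t 1)) := by
        rw [hΩ]
        symm
        apply lift_map_eq_one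
        intro η ξ'
        simp only [Q, LinearMap.smulRight_apply, LinearMap.comp_apply, LinearMap.flip_apply,
          TensorProduct.mk_apply, LinearMap.smul_apply, LinearMap.id_apply]
        rw [t₁, show τ * (τ⁻¹ * x * τ) * τ⁻¹ = (τ * τ⁻¹) * x * (τ * τ⁻¹) by
          simp only [mul_assoc], Matrix.mul_nonsing_inv _ hτd, one_mul, mul_one]
      rw [e1, htrel, hΩ, hσi, ← hττ, ← LinearMap.comp_apply (lH _), ← TensorProduct.lift_compr₂]
      apply lift_map_eq_one
      intro η ξ'
      simp [Q, mul_assoc]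
    have hr : ∀ y ζ, Ω (rH (MulOpposite.op y) ζ)
        = rH (MulOpposite.op (σ⁻¹ * y * σ)) (Ω ζ) := by
      intro y ζ
      have e1 : Ω (rH (MulOpposite.op y) ζ) = TensorProduct.lift (Q ζ)
          (TensorProduct.map (lHb (τ⁻¹ * y * τ)) (rH (MulOpposite.op 1)) (t 1)) := by
        rw [hΩ]
        symm
        apply lift_map_eq_one
        intro η ξ'
        simp only [Q, LinearMap.smulRight_apply, LinearMap.comp_apply, LinearMap.flip_apply,
          TensorProduct.mk_apply, LinearMap.smul_apply, LinearMap.id_apply, MulOpposite.op_one,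
          map_one, Module.End.one_apply, t₂, t₃, hdl]
        congr 2
        rw [← hττ, show τ⁻¹ * y * τ * tstar (η ⊗ₜ[ℂ] ζ) * (τ * τ)
            = τ⁻¹ * (y * τ * tstar (η ⊗ₜ[ℂ] ζ) * (τ * τ)) by simp only [mul_assoc],
          show tstar (η ⊗ₜ[ℂ] ζ) * (τ * y * τ⁻¹) * (τ * τ)
            = tstar (η ⊗ₜ[ℂ] ζ) * τ * y * (τ⁻¹ * τ) * τ by simp only [mul_assoc],
          Matrix.nonsing_inv_mul _ hτd, mul_one, Matrix.trace_mul_comm τ⁻¹,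
          show y * τ * tstar (η ⊗ₜ[ℂ] ζ) * (τ * τ) * τ⁻¹
            = y * τ * (tstar (η ⊗ₜ[ℂ] ζ) * τ * (τ * τ⁻¹)) by simp only [mul_assoc],
          Matrix.mul_nonsing_inv _ hτd, mul_one, Matrix.trace_mul_comm]
        simp only [mul_assoc]
      have e2 : TensorProduct.map (lHb (τ⁻¹ * y * τ)) (rH (MulOpposite.op 1)) (t 1)
          = TensorProduct.map LinearMap.id (rH (MulOpposite.op (σ⁻¹ * y * σ))) (t 1) := by
        rw [← htbim]
        have h := htbim 1 (σ⁻¹ * y * σ) 1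
        rw [map_one] at h
        refine Eq.trans ?_ h
        congr 1
        rw [hσi, ← hττ]
        rw [show τ * (τ⁻¹ * τ⁻¹ * y * (τ * τ)) * τ⁻¹
          = (τ * τ⁻¹) * τ⁻¹ * y * τ * (τ * τ⁻¹) by simp only [mul_assoc]]
        simp [Matrix.mul_nonsing_inv _ hτd]
      rw [e1, e2, hΩ, ← LinearMap.comp_apply (rH _), ← TensorProduct.lift_compr₂]
      apply lift_map_eq_one
      intro η ξ'
      simp [Q]
    rw [hl, hr]
end
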